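/- arXiv:2412.01367 — 2 statements merged into one kernel-verified Lean document; each statement's English description precedes it below -/
import Mathlib

section
/- Let M be an r×r real positive definite matrix (hM : M.PosDef) that is irreducible. Then M⁻¹ is positive definite and its positive semidefinite square root (hM.inv.posSemidef.sqrt) is irreducible. (Step in the proof of Theorem 1 with β = 1/2: if the conditional Fisher information 𝓘 is not block diagonal, then 𝓘^{-1/2} is not block diagonal.) -/
/-- A matrix is irreducible (not block diagonal under any simultaneous permutation of
rows and columns) if for every nonempty proper subset `S` of indices there are
`i ∈ S` and `j ∉ S` with `M i j ≠ 0`. -/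
def MatrixIrreducible {r : ℕ} (M : Matrix (Fin r) (Fin r) ℝ) : Prop :=
  ∀ S : Finset (Fin r), S.Nonempty → S ≠ Finset.univ →
    ∃ i ∈ S, ∃ j ∉ S, M i j ≠ 0

open scoped MatrixOrder

/-- If `M` is positive definite and irreducible, then `M⁻¹` is positive definite and
its positive semidefinite square root is irreducible. -/
theorem stmt_7 (r : ℕ) (M : Matrix (Fin r) (Fin r) ℝ) (hM : M.PosDef)
    (hirr : MatrixIrreducible M) :
    M⁻¹.PosDef ∧ MatrixIrreducible (CFC.sqrt M⁻¹) := by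
  refine ⟨hM.inv, ?_⟩
  intro S hS hS'
  by_contra hcon
  push Not at hcon
  have hRnn : 0 ≤ CFC.sqrt M⁻¹ := CFC.sqrt_nonneg _
  have hRR : CFC.sqrt M⁻¹ * CFC.sqrt M⁻¹ = M⁻¹ :=
    CFC.sqrt_mul_sqrt_self _ (Matrix.nonneg_iff_posSemidef.mpr hM.inv.posSemidef)
  have hsymm : ∀ i j, CFC.sqrt M⁻¹ i j = CFC.sqrt M⁻¹ j i := by
    intro i j
    have h := (Matrix.nonneg_iff_posSemidef.mp hRnn).isHermitian.apply i j
    simpa using h.symm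
  generalize CFC.sqrt M⁻¹ = R at *
  let P : Matrix (Fin r) (Fin r) ℝ := Matrix.diagonal (fun i => if i ∈ S then 1 else 0)
  have hPR : Commute P R := by
    change P * R = R * P
    ext i j
    simp only [P, Matrix.diagonal_mul, Matrix.mul_diagonal]
    by_cases hi : i ∈ S <;> by_cases hj : j ∈ S
    · simp [hi, hj]
    · simp [hi, hj, hcon i hi j hj]
    · simp [hi, hj, hsymm i j, hcon j hj i hi]
    · simp [hi, hj]
  have hPI : P * M⁻¹ = M⁻¹ * P := by
    rw [← hRR]
    exact hPR.mul_right hPR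
  have hdet : IsUnit M.det := hM.det_pos.ne'.isUnit
  have hPM : M * P = P * M := by
    calc M * P = M * (P * M⁻¹) * M := by
          rw [mul_assoc, mul_assoc, Matrix.nonsing_inv_mul _ hdet, mul_one]
      _ = P * M := by
          rw [hPI, ← mul_assoc, Matrix.mul_nonsing_inv _ hdet, one_mul]
  obtain ⟨i, hi, j, hj, hij⟩ := hirr S hS hS'
  have h := congrFun (congrFun hPM i) j
  simp only [P, Matrix.diagonal_mul, Matrix.mul_diagonal] at h
  simp [hi, hj] at h
  exact hij h.symm
end

section
/- (Proposition 1, case β = 1: form-invariance of the score-driven recursion.) Let T be an invertible r×r real matrix, c : Fin r → ℝ, A, B : Matrix (Fin r) (Fin r) ℝ, ∇̄ : ℕ → (Fin r → ℝ), and Ī : ℕ → Matrix (Fin r) (Fin r) ℝ with Ī k invertible for every k. Suppose f : ℕ → (Fin r → ℝ) satisfies, for all k, f (k+1) = c + A.mulVec ((((T⁻¹)ᵀ * Ī k * T⁻¹)⁻¹).mulVec ((T⁻¹)ᵀ.mulVec (∇̄ k))) + B.mulVec (f k). Then the transformed factors f̄ k := T⁻¹.mulVec (f k) satisfy, for all k,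 f̄ (k+1) = T⁻¹.mulVec c + (T⁻¹ * A * T).mulVec ((Ī k)⁻¹.mulVec (∇̄ k)) + (T⁻¹ * B * T).mulVec (f̄ k), i.e., the recursion with score scaled by the inverse conditional Fisher information keeps the same score-driven form under any non-singular linear transformation of the factors. -/
open Matrix

/-- Proposition 1, case `β = 1`: the score-driven recursion with score scaled by the
inverse conditional Fisher information keeps the same score-driven form under any
non-singular linear transformation `T` of the factors. -/
theorem stmt_15 (r : ℕ) (T : Matrix (Fin r) (Fin r) ℝ) (hT : IsUnit T.det)
    (c : Fin r → ℝ) (A B : Matrix (Fin r) (Fin r) ℝ)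
    (score : ℕ → (Fin r → ℝ)) (Ibar : ℕ → Matrix (Fin r) (Fin r) ℝ)
    (hIbar : ∀ k, IsUnit (Ibar k).det)
    (f : ℕ → (Fin r → ℝ))
    (hrec : ∀ k, f (k + 1) =
      c + A.mulVec ((((T⁻¹)ᵀ * Ibar k * T⁻¹)⁻¹).mulVec ((T⁻¹)ᵀ.mulVec (score k)))
        + B.mulVec (f k)) :
    ∀ k, T⁻¹.mulVec (f (k + 1)) =
      T⁻¹.mulVec c + (T⁻¹ * A * T).mulVec ((Ibar k)⁻¹.mulVec (score k))
        + (T⁻¹ * B * T).mulVec (T⁻¹.mulVec (f k)) := by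
  intro k
  have hTt : IsUnit ((T⁻¹)ᵀ).det := by
    rw [Matrix.det_transpose]
    exact Matrix.isUnit_nonsing_inv_det T hT
  have h1 : ((T⁻¹)ᵀ * Ibar k * T⁻¹)⁻¹ * (T⁻¹)ᵀ = T * (Ibar k)⁻¹ := by
    rw [Matrix.mul_inv_rev, Matrix.mul_inv_rev, Matrix.nonsing_inv_nonsing_inv T hT,
      Matrix.mul_assoc, Matrix.mul_assoc, Matrix.nonsing_inv_mul _ hTt, Matrix.mul_one]
  have h2 : T⁻¹ * B * T * T⁻¹ = T⁻¹ * B := by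
    rw [Matrix.mul_assoc, Matrix.mul_nonsing_inv T hT, Matrix.mul_one]
  rw [hrec k, Matrix.mulVec_mulVec (score k) _ (T⁻¹)ᵀ, h1]
  simp only [Matrix.mulVec_add, Matrix.mulVec_mulVec, h2, Matrix.mul_assoc]
  simp only [Matrix.mul_nonsing_inv T hT, Matrix.mul_one]
end
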